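/- Let d ∈ ℕ, let U ∈ GL_d(ℤ) be a unipotent matrix, and let μ be an ergodic U-invariant Borel probability measure on 𝕋^d = ℝ^d/ℤ^d whose support has exactly m ∈ ℕ connected components. Then for every n ∈ ℕ coprime to m, μ is the unique Uⁿ-invariant Borel probability measure on 𝕋^d whose support is contained in supp(μ); in other words, the restriction of Uⁿ to supp(μ) is uniquely ergodic with μ the unique invariant measure. -/

import Mathlib

open MeasureTheory Topology Pointwise

/-- The `d`-dimensional torus `ℝ^d/ℤ^d`. -/
abbrev Torus (d : ℕ) := Fin d → AddCircle (1 : ℝ)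

/-- The automorphism of the torus induced by an integer matrix. -/
noncomputable def toralAuto {d : ℕ} (U : Matrix (Fin d) (Fin d) ℤ) : Torus d → Torus d :=
  fun x i => ∑ j, U i j • x j

/-- The support of a measure. -/
def msupport {X : Type*} [TopologicalSpace X] [MeasurableSpace X] (μ : Measure X) : Set X :=
  {x : X | ∀ O : Set X, IsOpen O → x ∈ O → 0 < μ O}

/-! As `U` is unipotent, the coordinates of the torus are quasi-eigenfunctions of `f = toralAuto U`.
So the quasi-eigenfunctions `g` separate points, and a measure is determined by the integrals of
the functions `e(g) = exp (2πig)`. Replacing the torus by `supp μ`, we may assume that `μ` has full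
support; the `m` components of the space are then permuted cyclically.

If `g ∘ f - g` is torsion, then `g` is constant on the components, whence `g ∘ f^[m] = g`. As `n` is
coprime to `m`, an `f^[n]`-invariant measure gives the same integral to all the `e(g ∘ f^[i])`, and
their sum over `i < m` is constant by ergodicity, so `∫ e(g)` does not depend on the measure.

If `g ∘ f - g` is not torsion, then `∫ e(g) = 0` for every `f^[n]`-invariant measure, by induction
on the number of differences that kill `g`: either `g` is an eigenfunction of `f^[n * m]` with a
nontrivial phase, or the induction hypothesis applies to the differences `g ∘ f^[n * k] - g` and
makes the functions `e(g ∘ f^[n * k])` orthonormal, although they have the same integral. -/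

open Function Set
open scoped BoundedContinuousFunction

section FiniteOrder

variable {A : Type*} [AddCommGroup A] {K : Module.End ℤ A}

lemma isOfFinAddOrder_of_geom_sum {k j : ℕ} (hk : k ≠ 0) {y : A} (hj : ((K - 1) ^ j) y = 0)
    (hy : IsOfFinAddOrder ((∑ i ∈ Finset.range k, K ^ i) y)) : IsOfFinAddOrder y := by
  induction j generalizing y with
  | zero => simp [show y = 0 from hj]
  | succ j ih =>
    set T := ∑ i ∈ Finset.range k, K ^ i with hT
    set R := ∑ i ∈ Finset.range k, ∑ l ∈ Finset.range i, K ^ l with hR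
    have hcomm : T * (K - 1) = (K - 1) * T := (geom_sum_mul K k).trans (mul_geom_sum K k).symm
    have hTR : T = (k : Module.End ℤ A) + R * (K - 1) := by
      rw [hR, Finset.sum_mul]
      simp_rw [geom_sum_mul, Finset.sum_sub_distrib, Finset.sum_const, Finset.card_range,
        nsmul_one, ← hT, add_sub_cancel]
    have hKy : IsOfFinAddOrder ((K - 1) y) := by
      refine ih (by rwa [pow_succ] at hj) ?_
      have hKTy := (K - 1).toAddMonoidHom.isOfFinAddOrder hy
      rwa [← Module.End.mul_apply, hcomm]
    have hky : k • y = T y - R ((K - 1) y) := by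
      rw [hTR]
      simp
    refine .of_nsmul (n := k) ?_ hk
    rw [hky, sub_eq_add_neg]
    exact hy.add (R.toAddMonoidHom.isOfFinAddOrder hKy).neg

lemma isOfFinAddOrder_sub_one_of_pow_sub_one {k j : ℕ} (hk : k ≠ 0) {x : A}
    (hj : ((K - 1) ^ j) x = 0) (hx : IsOfFinAddOrder ((K ^ k - 1) x)) :
    IsOfFinAddOrder ((K - 1) x) := by
  refine isOfFinAddOrder_of_geom_sum (K := K) (j := j) hk ?_ ?_
  · rw [← Module.End.mul_apply, ← pow_succ, pow_succ', Module.End.mul_apply, hj, map_zero]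
  · rwa [← Module.End.mul_apply, geom_sum_mul]

lemma commute_sub_one_pow_sub_one {R : Type*} [Ring R] (a : R) (k : ℕ) :
    Commute (a - 1) (a ^ k - 1) :=
  (((Commute.refl a).sub_left (.one_left a)).pow_right k).sub_right (.one_right _)

lemma sub_one_pow_apply_pow_sub_one_eq_zero {j : ℕ} {x : A} (hj : ((K - 1) ^ (j + 1)) x = 0)
    (k : ℕ) : ((K - 1) ^ j) ((K ^ k - 1) x) = 0 := by
  have hcomm : Commute ((K - 1) ^ j) (K ^ k - 1) :=
    (commute_sub_one_pow_sub_one K k).pow_left j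
  rw [← Module.End.mul_apply, hcomm.eq, ← geom_sum_mul, mul_assoc, ← pow_succ',
    Module.End.mul_apply, hj, map_zero]

end FiniteOrder

section Transitive

variable {α : Type*} [Finite α]

lemma iterate_card_eq_self_of_forall_exists_iterate_eq {σ : α → α}
    (hσ : ∀ a b, ∃ k, σ^[k] a = b) (a : α) : σ^[Nat.card α] a = a := by
  have := Fintype.ofFinite α
  have hsurj : Surjective σ := fun b => by
    obtain ⟨k, hk⟩ := hσ (σ b) b
    exact ⟨σ^[k] b, by rw [← iterate_succ_apply' σ, iterate_succ_apply, hk]⟩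
  let τ : Equiv.Perm α := .ofBijective σ ⟨Finite.injective_iff_surjective.2 hsurj, hsurj⟩
  have hτ (k : ℕ) (b : α) : (τ ^ k) b = σ^[k] b := congrFun (Equiv.Perm.coe_pow τ k) b
  have hcycle : τ.IsCycleOn ((Finset.univ : Finset α) : Set α) := by
    refine ⟨by simp, fun b _ c _ => ?_⟩
    obtain ⟨k, hk⟩ := hσ b c
    exact ⟨k, by rw [zpow_natCast, hτ, hk]⟩
  rw [Nat.card_eq_fintype_card, ← Finset.card_univ, ← hτ,
    hcycle.pow_card_apply (Finset.mem_univ a)]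

end Transitive

section Koopman

variable {X Y : Type*} [TopologicalSpace X] [TopologicalSpace Y]

/-- The Koopman operator `g ↦ g ∘ f` of a continuous map `f`, acting on the continuous functions
with values in the circle, which is written additively. -/
def koopman (f : C(X, X)) : Module.End ℤ C(X, UnitAddCircle) :=
  (ContinuousMap.compAddMonoidHom' f).toIntLinearMap

@[simp]
lemma koopman_apply (f : C(X, X)) (g : C(X, UnitAddCircle)) (x : X) :
    koopman f g x = g (f x) := rfl

lemma koopman_pow_apply (f : C(X, X)) (k : ℕ) (g : C(X, UnitAddCircle)) (x : X) :
    (koopman f ^ k) g x = g (f^[k] x) := by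
  induction k generalizing g with
  | zero => rfl
  | succ k ih => rw [pow_succ, Module.End.mul_apply, ih, koopman_apply, iterate_succ_apply']

/-- The quasi-eigenfunctions of `f`, written additively: the continuous circle-valued functions
annihilated by a power of `g ↦ g ∘ f - g`. For transitive `f` these are the quasi-eigenfunctions of
Hahn and Parry. -/
def quasiEigenfunctions (f : C(X, X)) : Submodule ℤ C(X, UnitAddCircle) :=
  (koopman f).maxGenEigenspace 1

lemma mem_quasiEigenfunctions {f : C(X, X)} {g : C(X, UnitAddCircle)} :
    g ∈ quasiEigenfunctions f ↔ ∃ j : ℕ, ((koopman f - 1) ^ j) g = 0 := by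
  rw [quasiEigenfunctions, Module.End.mem_maxGenEigenspace, one_smul]

lemma comp_mem_quasiEigenfunctions {f : C(X, X)} {h : C(Y, Y)} {φ : C(Y, X)}
    (hφ : Semiconj φ h f) {g : C(X, UnitAddCircle)} (hg : g ∈ quasiEigenfunctions f) :
    g.comp φ ∈ quasiEigenfunctions h := by
  obtain ⟨j, hj⟩ := mem_quasiEigenfunctions.1 hg
  refine mem_quasiEigenfunctions.2 ⟨j, ?_⟩
  suffices hcomp : ((koopman h - 1) ^ j) (g.comp φ) = (((koopman f - 1) ^ j) g).comp φ by
    rw [hcomp, hj, ContinuousMap.zero_comp]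
  clear hg hj
  induction j generalizing g with
  | zero => rfl
  | succ j ih =>
    have hstep : (koopman h - 1) (g.comp φ) = ((koopman f - 1) g).comp φ := by
      ext y
      simp [hφ y]
    rw [pow_succ, pow_succ, Module.End.mul_apply, Module.End.mul_apply, hstep, ih]

/-- The exponential `g ↦ exp (2πig)` from circle-valued to complex-valued functions. It lands in the
bounded functions, since these are what `BoundedContinuousFunction.toLp` embeds into `L²`. -/
noncomputable def circleExp : AddChar C(X, UnitAddCircle) (X →ᵇ ℂ) where
  toFun g := .ofNormedAddCommGroup (fun x => (AddCircle.toCircle (g x) : ℂ)) (by fun_prop) 1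
    fun _ => (Circle.norm_coe _).le
  map_zero_eq_one' := by ext; simp
  map_add_eq_mul' g h := by ext; simp [AddCircle.toCircle_add]

lemma circleExp_apply (g : C(X, UnitAddCircle)) (x : X) :
    circleExp g x = (AddCircle.toCircle (g x) : ℂ) := rfl

lemma star_circleExp (g : C(X, UnitAddCircle)) : star (circleExp g) = circleExp (-g) := by
  ext x
  rw [circleExp_apply, ContinuousMap.neg_apply, AddCircle.toCircle_neg, Circle.coe_inv_eq_conj]
  rfl

end Koopman

section Orthogonality

lemma eq_zero_of_orthonormal_of_forall_inner_eq {𝕜 E ι : Type*} [RCLike 𝕜]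
    [SeminormedAddCommGroup E] [InnerProductSpace 𝕜 E] [Infinite ι] {v : ι → E}
    (hv : Orthonormal 𝕜 v) {x : E} {c : 𝕜} (hc : ∀ i, inner 𝕜 x (v i) = c) : c = 0 := by
  have hsum : Summable fun _ : ι => ‖c‖ ^ 2 := by
    simpa only [norm_inner_symm _ x, hc] using hv.inner_products_summable x
  rwa [summable_const_iff, sq_eq_zero_iff, norm_eq_zero] at hsum

variable {X : Type*} [TopologicalSpace X] [MeasurableSpace X] [BorelSpace X]
  {ν : Measure X} {f : C(X, X)} {n : ℕ} {g : C(X, UnitAddCircle)}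

lemma integral_circleExp_koopman_pow (hν : MeasurePreserving f^[n] ν ν)
    (g : C(X, UnitAddCircle)) :
    ∫ x, circleExp ((koopman f ^ n) g) x ∂ν = ∫ x, circleExp g x ∂ν := by
  simp_rw [circleExp_apply, koopman_pow_apply, ← circleExp_apply]
  rw [← integral_map hν.aemeasurable
    (circleExp g).continuous.stronglyMeasurable.aestronglyMeasurable, hν.map_eq]

lemma integral_circleExp_koopman_pow_mul (hν : MeasurePreserving f^[n] ν ν) (k : ℕ)
    (g : C(X, UnitAddCircle)) :
    ∫ x, circleExp ((koopman f ^ (n * k)) g) x ∂ν = ∫ x, circleExp g x ∂ν :=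
  integral_circleExp_koopman_pow (by rw [iterate_mul]; exact hν.iterate k) g

lemma integral_circleExp_koopman_pow_of_coprime {m : ℕ} (hn : n.Coprime m)
    (hν : MeasurePreserving f^[n] ν ν) (hg : (koopman f ^ m) g = g) (i : ℕ) :
    ∫ x, circleExp ((koopman f ^ i) g) x ∂ν = ∫ x, circleExp g x ∂ν := by
  obtain ⟨k, hk0, hki⟩ := Nat.chineseRemainder hn 0 i
  obtain ⟨l, rfl⟩ := Nat.modEq_zero_iff_dvd.1 hk0
  have hperiodic : IsPeriodicPt (koopman f) m g := by
    rwa [IsPeriodicPt, IsFixedPt, ← Module.End.pow_apply]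
  have hil : (koopman f ^ i) g = (koopman f ^ (n * l)) g := by
    rw [Module.End.pow_apply, Module.End.pow_apply, ← hperiodic.iterate_mod_apply i, ← hki,
      hperiodic.iterate_mod_apply]
  rw [hil, integral_circleExp_koopman_pow_mul hν]

lemma inner_toLp_circleExp [IsFiniteMeasure ν] (g h : C(X, UnitAddCircle)) :
    inner ℂ (BoundedContinuousFunction.toLp 2 ν ℂ (circleExp g))
      (BoundedContinuousFunction.toLp 2 ν ℂ (circleExp h)) = ∫ x, circleExp (h - g) x ∂ν := by
  rw [BoundedContinuousFunction.inner_toLp, sub_eq_add_neg, circleExp.map_add_eq_mul,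
    ← star_circleExp]
  rfl

lemma integral_circleExp_eq_zero_of_koopman_pow_eq_add_const (hν : MeasurePreserving f^[n] ν ν)
    {c : UnitAddCircle} (hc : c ≠ 0) (hg : (koopman f ^ n) g = g + ContinuousMap.const X c) :
    ∫ x, circleExp g x ∂ν = 0 := by
  have hphase : (AddCircle.toCircle c : ℂ) ≠ 1 := by
    rw [Circle.coe_eq_one.ne, ← AddCircle.toCircle_zero]
    exact (AddCircle.injective_toCircle one_ne_zero).ne hc
  have hself : (∫ x, circleExp g x ∂ν) * AddCircle.toCircle c = ∫ x, circleExp g x ∂ν := by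
    rw [← integral_mul_const]
    conv_rhs => rw [← integral_circleExp_koopman_pow hν g, hg, circleExp.map_add_eq_mul]
    rfl
  by_contra hne
  exact hphase (mul_left_cancel₀ hne (hself.trans (mul_one _).symm))

variable [IsProbabilityMeasure ν]

lemma integral_circleExp_eq_zero_of_forall_koopman_pow_sub_one
    (hν : MeasurePreserving f^[n] ν ν)
    (h : ∀ k ≠ 0, ∫ x, circleExp ((koopman f ^ (n * k) - 1) g) x ∂ν = 0) :
    ∫ x, circleExp g x ∂ν = 0 := by
  let v : ℕ → Lp ℂ 2 ν := fun k =>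
    BoundedContinuousFunction.toLp 2 ν ℂ (circleExp ((koopman f ^ (n * k)) g))
  have hv_norm (k : ℕ) : ‖v k‖ = 1 := by
    have hinner : inner ℂ (v k) (v k) = 1 := by
      rw [inner_toLp_circleExp, sub_self, circleExp.map_zero_eq_one]
      simp
    rw [norm_eq_sqrt_re_inner (𝕜 := ℂ), hinner]
    simp
  have hv_lt {i j : ℕ} (hij : i < j) : inner ℂ (v i) (v j) = 0 := by
    have hsub : (koopman f ^ (n * j)) g - (koopman f ^ (n * i)) g =
        (koopman f ^ (n * i)) ((koopman f ^ (n * (j - i)) - 1) g) := by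
      rw [← Module.End.mul_apply, mul_sub, ← pow_add, ← mul_add, Nat.add_sub_cancel' hij.le,
        mul_one, LinearMap.sub_apply]
    rw [inner_toLp_circleExp, hsub, integral_circleExp_koopman_pow_mul hν,
      h _ (Nat.sub_ne_zero_of_lt hij)]
  have hv_orthonormal : Orthonormal ℂ v := by
    refine ⟨hv_norm, fun i j hij => ?_⟩
    rcases hij.lt_or_gt with hlt | hgt
    exacts [hv_lt hlt, inner_eq_zero_symm.1 (hv_lt hgt)]
  refine eq_zero_of_orthonormal_of_forall_inner_eq (𝕜 := ℂ) hv_orthonormal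
    (x := BoundedContinuousFunction.toLp 2 ν ℂ (circleExp 0)) fun k => ?_
  rw [inner_toLp_circleExp, sub_zero, integral_circleExp_koopman_pow_mul hν]

end Orthogonality

section MeasureExt

lemma mem_span_circleExp_of_mem_adjoin {X : Type*} [TopologicalSpace X]
    {Γ : AddSubgroup C(X, UnitAddCircle)} {φ : X →ᵇ ℂ}
    (hφ : φ ∈ StarAlgebra.adjoin ℂ (circleExp '' (Γ : Set C(X, UnitAddCircle)))) :
    φ ∈ Submodule.span ℂ (circleExp '' (Γ : Set C(X, UnitAddCircle))) := by
  set S : Submonoid (X →ᵇ ℂ) := Γ.toAddSubmonoid.toSubmonoid.map circleExp.toMonoidHom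
  have hS : circleExp '' (Γ : Set C(X, UnitAddCircle)) = S := rfl
  have hS_star : star (S : Set (X →ᵇ ℂ)) ⊆ S := by
    rintro φ ⟨g, hg, hgφ⟩
    refine ⟨.ofAdd (-g.toAdd), Γ.neg_mem hg, ?_⟩
    rw [← star_star φ, ← hgφ]
    exact (star_circleExp g.toAdd).symm
  rw [hS] at hφ ⊢
  rwa [← Submonoid.closure_eq S, ← union_eq_self_of_subset_right hS_star,
    ← StarAlgebra.adjoin_eq_span]

variable {X : Type*} [TopologicalSpace X] [PolishSpace X] [MeasurableSpace X] [BorelSpace X]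
  {μ ν : Measure X} [IsFiniteMeasure μ] [IsFiniteMeasure ν]

lemma measure_eq_of_forall_integral_circleExp_eq {Γ : AddSubgroup C(X, UnitAddCircle)}
    (hsep : ∀ x y, x ≠ y → ∃ g ∈ Γ, g x ≠ g y)
    (h : ∀ g ∈ Γ, ∫ x, circleExp g x ∂μ = ∫ x, circleExp g x ∂ν) : μ = ν := by
  refine ext_of_forall_mem_subalgebra_integral_eq_of_polish (𝕜 := ℂ)
    (A := StarAlgebra.adjoin ℂ (circleExp '' (Γ : Set C(X, UnitAddCircle))))
    (fun x y hxy => ?_) fun φ hφ => ?_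
  · obtain ⟨g, hg, hgxy⟩ := hsep x y hxy
    refine ⟨circleExp g, ⟨_, ⟨circleExp g, ?_, rfl⟩, rfl⟩, ?_⟩
    · exact StarAlgebra.subset_adjoin ℂ _ (mem_image_of_mem _ hg)
    · exact fun heq => hgxy (AddCircle.injective_toCircle one_ne_zero (Circle.ext heq))
  · replace hφ := mem_span_circleExp_of_mem_adjoin hφ
    induction hφ using Submodule.span_induction with
    | mem φ hφ =>
      obtain ⟨g, hg, rfl⟩ := hφ
      exact h g hg
    | zero => simp
    | add φ ψ _ _ hφ hψ =>
      simp only [BoundedContinuousFunction.add_apply]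
      rw [integral_add (φ.integrable μ) (ψ.integrable μ), hφ, hψ,
        integral_add (φ.integrable ν) (ψ.integrable ν)]
    | smul c φ _ hφ =>
      simp only [BoundedContinuousFunction.smul_apply]
      rw [integral_smul, hφ, integral_smul]

end MeasureExt

section OpenPos

variable {X : Type*} [TopologicalSpace X] [MeasurableSpace X] [OpensMeasurableSpace X]
  {μ : Measure X} [μ.IsOpenPosMeasure] {f : X → X}

lemma exists_forall_eq_of_comp_eq (hf : Ergodic f μ) {Y : Type*} [TopologicalSpace Y]
    [TopologicalSpace.MetrizableSpace Y] [SecondCountableTopology Y] [Nonempty Y] {G : X → Y}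
    (hG : Continuous G) (hGf : G ∘ f = G) : ∃ c, ∀ x, G x = c := by
  obtain ⟨c, hc⟩ := hf.ae_eq_const_of_ae_eq_comp_ae hG.aestronglyMeasurable (.of_eq hGf)
  exact ⟨c, congrFun ((hG.ae_eq_iff_eq μ continuous_const).1 hc)⟩

lemma eq_univ_of_isClopen_of_subset_preimage [IsFiniteMeasure μ] (hf : Ergodic f μ) {B : Set X}
    (hB : IsClopen B) (hne : B.Nonempty) (hBf : B ⊆ f ⁻¹' B) : B = univ := by
  rcases hf.ae_empty_or_univ_of_ae_le_preimage hB.isOpen.measurableSet.nullMeasurableSet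
    (.of_forall hBf) with hempty | huniv
  · exact absurd (hB.isOpen.ae_eq_empty_iff_eq.1 hempty) hne.ne_empty
  · exact hB.isClosed.ae_eq_univ_iff_eq.1 huniv

end OpenPos

section Components

lemma eq_of_connectedComponent_eq_of_nsmul_eq {X : Type*} [TopologicalSpace X]
    {g : C(X, UnitAddCircle)} {q : ℕ} (hq : 0 < q) {c : UnitAddCircle} (hg : ∀ x, q • g x = c)
    {x y : X} (hxy : (x : ConnectedComponents X) = y) : g x = g y := by
  have hfin : {u : UnitAddCircle | q • u = c}.Finite := by
    refine ((AddCircle.finite_torsion (1 : ℝ) hq).preimage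
      (sub_left_injective (b := g y)).injOn).subset fun u hu => ?_
    simp only [mem_preimage, mem_ofPred_eq, smul_sub, hg y]
    exact sub_eq_zero.2 hu
  exact isPreconnected_connectedComponent.constant_of_mapsTo hfin.isDiscrete
    g.continuous.continuousOn (fun z _ => hg z)
    (ConnectedComponents.coe_eq_coe'.1 hxy) mem_connectedComponent

variable {X : Type*} [TopologicalSpace X] [MeasurableSpace X] [OpensMeasurableSpace X]
  {μ : Measure X} [μ.IsOpenPosMeasure] {f : C(X, X)}

lemma exists_forall_sum_circleExp_eq {g : C(X, UnitAddCircle)} {m : ℕ}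
    (hf : Ergodic f μ) (hg : (koopman f ^ m) g = g) :
    ∃ c, ∀ x, ∑ i ∈ Finset.range m, circleExp ((koopman f ^ i) g) x = c := by
  refine exists_forall_eq_of_comp_eq hf (by fun_prop) <| funext fun x => ?_
  have hshift (i : ℕ) :
      circleExp ((koopman f ^ i) g) (f x) = circleExp ((koopman f ^ (i + 1)) g) x := by
    rw [circleExp_apply, circleExp_apply, koopman_pow_apply, koopman_pow_apply,
      iterate_succ_apply]
  set φ : ℕ → ℂ := fun i => circleExp ((koopman f ^ i) g) x
  have hφ : φ m = φ 0 := by simp only [φ, hg, pow_zero, Module.End.one_apply]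
  have hsum := (Finset.sum_range_succ' φ m).symm.trans (Finset.sum_range_succ φ m)
  rw [hφ] at hsum
  exact (Finset.sum_congr rfl fun i _ => hshift i).trans (add_right_cancel hsum)

variable [IsFiniteMeasure μ] [Finite (ConnectedComponents X)]

lemma coe_iterate_card_connectedComponents (hf : Ergodic f μ) (x : X) :
    (f^[Nat.card (ConnectedComponents X)] x : ConnectedComponents X) = x := by
  set σ := f.continuous.connectedComponentsMap
  have hσ (k : ℕ) (x : X) : σ^[k] x = (f^[k] x : X) :=
    (Semiconj.iterate_right (f := ((↑) : X → ConnectedComponents X)) (fun _ => rfl) k x).symm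
  have htrans (a b : ConnectedComponents X) : ∃ k, σ^[k] a = b := by
    set A : Set (ConnectedComponents X) := {b | ∃ k, σ^[k] a = b}
    have huniv : ((↑) : X → ConnectedComponents X) ⁻¹' A = univ := by
      refine eq_univ_of_isClopen_of_subset_preimage hf
        ((isClopen_discrete A).preimage ConnectedComponents.continuous_coe) ?_ ?_
      · obtain ⟨x, rfl⟩ := ConnectedComponents.surjective_coe a
        exact ⟨x, 0, rfl⟩
      · rintro x ⟨k, hk⟩
        exact ⟨k + 1, (iterate_succ_apply' σ k a).trans (congrArg σ hk)⟩
    obtain ⟨y, rfl⟩ := ConnectedComponents.surjective_coe b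
    exact huniv.ge (mem_univ y)
  rw [← hσ, iterate_card_eq_self_of_forall_exists_iterate_eq htrans]

lemma koopman_pow_card_eq_self (hf : Ergodic f μ) {g : C(X, UnitAddCircle)}
    (hg : IsOfFinAddOrder ((koopman f - 1) g)) :
    (koopman f ^ Nat.card (ConnectedComponents X)) g = g := by
  obtain ⟨q, hq, hqg⟩ := isOfFinAddOrder_iff_nsmul_eq_zero.1 hg
  obtain ⟨c, hc⟩ := exists_forall_eq_of_comp_eq hf (q • g).continuous <| funext fun x => by
    simpa [smul_sub, sub_eq_zero] using DFunLike.congr_fun hqg x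
  ext x
  rw [koopman_pow_apply]
  exact eq_of_connectedComponent_eq_of_nsmul_eq hq hc (coe_iterate_card_connectedComponents hf x)

end Components

section UniqueErgodicity

variable {X : Type*} [TopologicalSpace X] [MeasurableSpace X] [BorelSpace X]
  {μ ν : Measure X} [IsProbabilityMeasure μ] [μ.IsOpenPosMeasure] [IsProbabilityMeasure ν]
  {f : C(X, X)} {n : ℕ} {g : C(X, UnitAddCircle)}

lemma integral_circleExp_eq_of_periodic {m : ℕ} (hm : m ≠ 0) (hn : n.Coprime m)
    (hf : Ergodic f μ) (hν : MeasurePreserving f^[n] ν ν) (hg : (koopman f ^ m) g = g) :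
    ∫ x, circleExp g x ∂ν = ∫ x, circleExp g x ∂μ := by
  obtain ⟨c, hc⟩ := exists_forall_sum_circleExp_eq hf hg
  have hmean (ρ : Measure X) [IsProbabilityMeasure ρ] (hρ : MeasurePreserving f^[n] ρ ρ) :
      m * ∫ x, circleExp g x ∂ρ = c := by
    calc m * ∫ x, circleExp g x ∂ρ
        = ∑ i ∈ Finset.range m, ∫ x, circleExp ((koopman f ^ i) g) x ∂ρ := by
          simp [integral_circleExp_koopman_pow_of_coprime hn hρ hg]
      _ = ∫ x, ∑ i ∈ Finset.range m, circleExp ((koopman f ^ i) g) x ∂ρ :=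
          (integral_finsetSum _ fun i _ => (circleExp _).integrable ρ).symm
      _ = c := by simp [hc]
  exact mul_left_cancel₀ (Nat.cast_ne_zero.2 hm)
    ((hmean ν hν).trans (hmean μ (hf.toMeasurePreserving.iterate n)).symm)

variable [Finite (ConnectedComponents X)]

lemma exists_koopman_pow_eq_add_const (hf : Ergodic f μ)
    (hg : IsOfFinAddOrder ((koopman f - 1) ((koopman f - 1) g))) (n : ℕ) :
    ∃ c, (koopman f ^ (n * Nat.card (ConnectedComponents X))) g = g + .const X c := by
  set N := n * Nat.card (ConnectedComponents X) with hN
  have hperiodic : (koopman f ^ N) ((koopman f - 1) g) = (koopman f - 1) g := by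
    rw [hN, mul_comm, pow_mul, Module.End.pow_apply]
    exact iterate_fixed (koopman_pow_card_eq_self hf hg) n
  have hinv : koopman f ((koopman f ^ N) g - g) = (koopman f ^ N) g - g := by
    rw [LinearMap.sub_apply, Module.End.one_apply, map_sub] at hperiodic
    rw [map_sub, ← Module.End.mul_apply, ← pow_succ', pow_succ, Module.End.mul_apply]
    exact sub_eq_sub_iff_sub_eq_sub.1 hperiodic
  obtain ⟨c, hc⟩ := exists_forall_eq_of_comp_eq hf ((koopman f ^ N) g - g).continuous
    (congrArg DFunLike.coe hinv)
  refine ⟨c, ContinuousMap.ext fun x => ?_⟩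
  rw [ContinuousMap.add_apply, ContinuousMap.const_apply, ← hc x, ContinuousMap.sub_apply,
    add_sub_cancel]

lemma integral_circleExp_eq_zero_of_not_isOfFinAddOrder (hf : Ergodic f μ) (hn : n ≠ 0)
    (hν : MeasurePreserving f^[n] ν ν) {j : ℕ} (hj : ((koopman f - 1) ^ j) g = 0)
    (hg : ¬ IsOfFinAddOrder ((koopman f - 1) g)) : ∫ x, circleExp g x ∂ν = 0 := by
  have hX : Nonempty X := nonempty_of_isProbabilityMeasure μ
  induction j generalizing g with
  | zero => exact absurd (by simp [show g = 0 from hj]) hg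
  | succ j ih =>
    by_cases hg2 : IsOfFinAddOrder ((koopman f - 1) ((koopman f - 1) g))
    · obtain ⟨c, hc⟩ := exists_koopman_pow_eq_add_const hf hg2 n
      have hc0 : c ≠ 0 := by
        rintro rfl
        refine hg (isOfFinAddOrder_sub_one_of_pow_sub_one
          (mul_ne_zero hn (Nat.card_pos (α := ConnectedComponents X)).ne') hj ?_)
        rw [LinearMap.sub_apply, hc, Module.End.one_apply, add_sub_cancel_left]
        exact IsOfFinAddOrder.zero
      refine integral_circleExp_eq_zero_of_koopman_pow_eq_add_const ?_ hc0 hc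
      rw [iterate_mul]
      exact hν.iterate _
    · refine integral_circleExp_eq_zero_of_forall_koopman_pow_sub_one hν fun k hk =>
        ih (sub_one_pow_apply_pow_sub_one_eq_zero hj (n * k)) fun hfin => hg2 ?_
      rw [← Module.End.mul_apply, (commute_sub_one_pow_sub_one _ _).eq] at hfin
      exact isOfFinAddOrder_sub_one_of_pow_sub_one (mul_ne_zero hn hk)
        (by rwa [pow_succ] at hj) hfin

lemma measure_eq_of_quasiEigenfunctions_separate_points [PolishSpace X]
    (hsep : ∀ x y, x ≠ y → ∃ g ∈ quasiEigenfunctions f, g x ≠ g y) (hf : Ergodic f μ)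
    (hn : n ≠ 0) (hcop : n.Coprime (Nat.card (ConnectedComponents X)))
    (hν : MeasurePreserving f^[n] ν ν) : ν = μ := by
  have hX : Nonempty X := nonempty_of_isProbabilityMeasure μ
  have hcard : Nat.card (ConnectedComponents X) ≠ 0 := Nat.card_pos.ne'
  refine measure_eq_of_forall_integral_circleExp_eq (Γ := (quasiEigenfunctions f).toAddSubgroup)
    hsep fun g hg => ?_
  obtain ⟨j, hj⟩ := mem_quasiEigenfunctions.1 hg
  by_cases hfin : IsOfFinAddOrder ((koopman f - 1) g)
  · exact integral_circleExp_eq_of_periodic hcard hcop hf hν (koopman_pow_card_eq_self hf hfin)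
  · rw [integral_circleExp_eq_zero_of_not_isOfFinAddOrder hf hn hν hj hfin,
      integral_circleExp_eq_zero_of_not_isOfFinAddOrder hf one_ne_zero hf.toMeasurePreserving hj
        hfin]

end UniqueErgodicity

section Embedding

lemma measurePreserving_val_comap {X : Type*} [MeasurableSpace X] {ν : Measure X} {s : Set X}
    (hs : MeasurableSet s) (h : ∀ᵐ x ∂ν, x ∈ s) :
    MeasurePreserving ((↑) : s → X) (ν.comap (↑)) ν := by
  simpa only [Measure.restrict_eq_self_of_ae_mem h] using measurePreserving_subtype_coe (μa := ν) hs

variable {X Y : Type*} [MeasurableSpace X] [MeasurableSpace Y] {μ : Measure X} {μ' : Measure Y}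
  {φ : Y → X} {f : X → X} {h : Y → Y}

lemma measurePreserving_of_semiconj (hφ : MeasurableEmbedding φ) (hφμ : MeasurePreserving φ μ' μ)
    (hsemi : Semiconj φ h f) (hh : Measurable h) (hf : MeasurePreserving f μ μ) :
    MeasurePreserving h μ' μ' := by
  have hmap : (μ'.map h).map φ = μ'.map φ := by
    rw [Measure.map_map hφ.measurable hh, hsemi.comp_eq, ← Measure.map_map hf.measurable
      hφ.measurable, hφμ.map_eq, hf.map_eq]
  exact ⟨hh, by rw [← hφ.comap_map (μ'.map h), hmap, hφ.comap_map]⟩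

lemma ergodic_of_semiconj (hφ : MeasurableEmbedding φ) (hφμ : MeasurePreserving φ μ' μ)
    (hsemi : Semiconj φ h f) (hh : Measurable h) (hf : Ergodic f μ) : Ergodic h μ' := by
  refine ⟨measurePreserving_of_semiconj hφ hφμ hsemi hh hf.toMeasurePreserving,
    ⟨fun s hs hhs => ?_⟩⟩
  have hφs : NullMeasurableSet (φ '' s) μ := (hφ.measurableSet_image.2 hs).nullMeasurableSet
  have hinv : f ⁻¹' (φ '' s) =ᵐ[μ] φ '' s := by
    refine Filter.eventuallyEq_set.2 ?_
    rw [← hφμ.map_eq]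
    refine hφ.ae_map_iff.2 (.of_forall fun y => ?_)
    rw [mem_preimage, ← hsemi y, hφ.injective.mem_set_image, hφ.injective.mem_set_image,
      ← mem_preimage, hhs]
  rw [← preimage_image_eq s hφ.injective, hφμ.aeconst_preimage hφs]
  exact hf.quasiErgodic.aeconst_set₀ hφs hinv

end Embedding

section Support

variable {X : Type*} [TopologicalSpace X] [MeasurableSpace X] {μ : Measure X}

lemma msupport_eq_support (μ : Measure X) : msupport μ = μ.support := by
  rw [Measure.support_eq_forall_isOpen]
  ext x
  exact ⟨fun h O hx hO => h O hO hx, fun h O hO hx => h O hx hO⟩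

lemma isClosed_msupport (μ : Measure X) : IsClosed (msupport μ) :=
  msupport_eq_support μ ▸ Measure.isClosed_support

lemma ae_mem_msupport [HereditarilyLindelofSpace X] (μ : Measure X) : ∀ᵐ x ∂μ, x ∈ msupport μ :=
  msupport_eq_support μ ▸ Measure.support_mem_ae

lemma mapsTo_msupport [OpensMeasurableSpace X] {f : C(X, X)} (hf : MeasurePreserving f μ μ) :
    MapsTo f (msupport μ) (msupport μ) := fun x hx O hO hxO => by
  rw [← hf.measure_preimage hO.measurableSet.nullMeasurableSet]
  exact hx _ (hO.preimage f.continuous) hxO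

lemma isOpenPosMeasure_comap_msupport [OpensMeasurableSpace X] [HereditarilyLindelofSpace X]
    (μ : Measure X) : (μ.comap ((↑) : msupport μ → X)).IsOpenPosMeasure := by
  refine ⟨fun U hU ⟨x, hx⟩ => ?_⟩
  obtain ⟨V, hV, rfl⟩ := isOpen_induced_iff.1 hU
  have hval := measurePreserving_val_comap (isClosed_msupport μ).measurableSet (ae_mem_msupport μ)
  rw [hval.measure_preimage hV.measurableSet.nullMeasurableSet]
  exact (x.2 V hV hx).ne'

end Support

theorem unique_ergodicity_on_support_unipotent_general {X : Type*} [TopologicalSpace X]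
    [PolishSpace X] [MeasurableSpace X] [BorelSpace X] {f : C(X, X)}
    (hsep : ∀ x y, x ≠ y → ∃ g ∈ quasiEigenfunctions f, g x ≠ g y)
    {μ : Measure X} [IsProbabilityMeasure μ] (herg : Ergodic f μ)
    [Finite (ConnectedComponents (msupport μ))] {n : ℕ} (hn : 0 < n)
    (hcop : n.Coprime (Nat.card (ConnectedComponents (msupport μ)))) :
    Measure.map f^[n] μ = μ ∧
      ∀ ν : Measure X, IsProbabilityMeasure ν →
        Measure.map f^[n] ν = ν → msupport ν ⊆ msupport μ → ν = μ := by
  refine ⟨(herg.toMeasurePreserving.iterate n).map_eq, fun ν _ hν hsupp => ?_⟩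
  set S := msupport μ
  have hS : MeasurableSet S := (isClosed_msupport μ).measurableSet
  have : PolishSpace S := (isClosed_msupport μ).polishSpace
  let φ : C(S, X) := ⟨Subtype.val, continuous_subtype_val⟩
  let h : C(S, S) := ⟨_, f.continuous.restrict (mapsTo_msupport herg.toMeasurePreserving)⟩
  have hsemi : Semiconj φ h f := fun _ => rfl
  have hφ : MeasurableEmbedding φ := .subtype_coe hS
  have hrange : range φ = S := Subtype.range_coe
  have hμS : ∀ᵐ x ∂μ, x ∈ S := ae_mem_msupport μ
  have hνS : ∀ᵐ x ∂ν, x ∈ S := (ae_mem_msupport ν).mono hsupp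
  have hμφ : MeasurePreserving φ (μ.comap φ) μ := measurePreserving_val_comap hS hμS
  have hνφ : MeasurePreserving φ (ν.comap φ) ν := measurePreserving_val_comap hS hνS
  have : IsProbabilityMeasure (μ.comap φ) := hφ.isProbabilityMeasure_comap (by rwa [hrange])
  have : IsProbabilityMeasure (ν.comap φ) := hφ.isProbabilityMeasure_comap (by rwa [hrange])
  have : (μ.comap φ).IsOpenPosMeasure := isOpenPosMeasure_comap_msupport μ
  have hsepS : ∀ x y, x ≠ y → ∃ g ∈ quasiEigenfunctions h, g x ≠ g y := fun x y hxy => by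
    obtain ⟨g, hg, hgxy⟩ := hsep x y (Subtype.val_injective.ne hxy)
    exact ⟨g.comp φ, comp_mem_quasiEigenfunctions hsemi hg, hgxy⟩
  rw [← hνφ.map_eq, ← hμφ.map_eq, measure_eq_of_quasiEigenfunctions_separate_points hsepS
    (ergodic_of_semiconj hφ hμφ hsemi h.measurable herg) hn.ne' hcop
    (measurePreserving_of_semiconj hφ hνφ (hsemi.iterate_right n) (h.measurable.iterate n)
      ⟨f.measurable.iterate n, hν⟩)]

section Torus

variable {d : ℕ} {U : Matrix (Fin d) (Fin d) ℤ}

lemma continuous_toralAuto (U : Matrix (Fin d) (Fin d) ℤ) : Continuous (toralAuto U) := by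
  unfold toralAuto
  fun_prop

lemma koopman_toralAuto_sub_one_pow_eval (j : ℕ) (i : Fin d) :
    ((koopman ⟨toralAuto U, continuous_toralAuto U⟩ - 1) ^ j) (.eval i) =
      ∑ k, ((U - 1) ^ j) i k • ContinuousMap.eval k := by
  induction j generalizing i with
  | zero => simp [Matrix.one_apply]
  | succ j ih =>
    set K := koopman ⟨toralAuto U, continuous_toralAuto U⟩
    have hstep : (K - 1) (.eval i) = ∑ k, (U - 1) i k • ContinuousMap.eval k := by
      ext x
      simp [K, toralAuto, sub_smul, Matrix.one_apply]
    calc ((K - 1) ^ (j + 1)) (.eval i)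
        = ∑ l, (U - 1) i l • ∑ k, ((U - 1) ^ j) l k • ContinuousMap.eval k := by
          rw [pow_succ, Module.End.mul_apply, hstep, map_sum]
          simp_rw [map_zsmul, ih]
      _ = ∑ k, ((U - 1) ^ (j + 1)) i k • ContinuousMap.eval k := by
          simp_rw [pow_succ', Matrix.mul_apply, Finset.sum_smul, Finset.smul_sum, smul_smul]
          exact Finset.sum_comm

lemma eval_mem_quasiEigenfunctions_toralAuto (hU : (U - 1) ^ d = 0) (i : Fin d) :
    .eval i ∈ quasiEigenfunctions ⟨toralAuto U, continuous_toralAuto U⟩ :=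
  mem_quasiEigenfunctions.2 ⟨d, by simp [koopman_toralAuto_sub_one_pow_eval, hU]⟩

end Torus

/-- If `μ` is an ergodic invariant measure for a unipotent toral automorphism `U` whose
support has exactly `m` connected components, then, for every `n` coprime to `m`, `μ` is the
unique `Uⁿ`-invariant Borel probability measure supported inside `supp μ`; i.e. the
restriction of `Uⁿ` to `supp μ` is uniquely ergodic with unique invariant measure `μ`. -/
theorem unique_ergodicity_on_support_unipotent
    {d : ℕ} (hd : 0 < d) (U : Matrix (Fin d) (Fin d) ℤ)
    (hUdet : IsUnit U.det) (hUuni : (U - 1) ^ d = 0)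
    (μ : Measure (Torus d)) (hμp : IsProbabilityMeasure μ)
    (herg : Ergodic (toralAuto U) μ)
    (m : ℕ) (hm : 0 < m) (hcomp : Nat.card (ConnectedComponents ↥(msupport μ)) = m)
    (n : ℕ) (hn : 0 < n) (hcop : Nat.Coprime n m) :
    Measure.map ((toralAuto U)^[n]) μ = μ ∧
      ∀ ν : Measure (Torus d), IsProbabilityMeasure ν →
        Measure.map ((toralAuto U)^[n]) ν = ν → msupport ν ⊆ msupport μ → ν = μ := by
  subst hcomp
  have := Nat.finite_of_card_ne_zero hm.ne'
  refine unique_ergodicity_on_support_unipotent_general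
    (f := ⟨toralAuto U, continuous_toralAuto U⟩) (fun x y hxy => ?_) herg hn hcop
  obtain ⟨i, hi⟩ := Function.ne_iff.1 hxy
  exact ⟨_, eval_mem_quasiEigenfunctions_toralAuto hUuni i, hi⟩
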